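/- arXiv:2103.14809 — 2 statements merged into one kernel-verified Lean document; each statement's English description precedes it below -/
import Mathlib

section
/- Let R be a φ-ring. Then R is nonnil-coherent if and only if every pure quotient of a nonnil-FP-injective R-module is nonnil-FP-injective; that is, if and only if for every nonnil-FP-injective R-module M and every pure submodule N of M, the quotient M/N is nonnil-FP-injective. -/
open CategoryTheory

universe u

/-- A commutative ring is a `φ`-ring if its nilradical is a divided prime ideal. -/
def IsPhiRing (R : Type u) [CommRing R] : Prop :=
  (nilradical R).IsPrime ∧ ∀ x : R, x ∉ nilradical R → nilradical R ≤ Ideal.span {x}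

/-- A ring is nonnil-coherent if every finitely generated nonnil ideal is
finitely presented as a module. -/
def IsNonnilCoherent (R : Type u) [CommRing R] : Prop :=
  ∀ I : Ideal R, I.FG → ¬ I ≤ nilradical R → Module.FinitePresentation R I

/-- A module is φ-torsion if every element is annihilated by a nonnil ideal. -/
def IsPhiTorsion (R : Type u) [CommRing R] (T : Type u) [AddCommGroup T] [Module R T] : Prop :=
  ∀ t : T, ∃ I : Ideal R, ¬ I ≤ nilradical R ∧ ∀ a ∈ I, a • t = 0

/-- A module `M` is φ-flat if `Tor₁ᴿ(T, M) = 0` for every φ-torsion module `T`. -/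
def IsPhiFlat (R : Type u) [CommRing R] (M : Type u) [AddCommGroup M] [Module R M] : Prop :=
  ∀ (T : Type u) [AddCommGroup T] [Module R T], IsPhiTorsion R T →
    Subsingleton (((Tor (ModuleCat.{u} R) 1).obj (ModuleCat.of R T)).obj (ModuleCat.of R M))

/-- A module `M` is nonnil-injective if `Ext¹ᴿ(T, M) = 0` for every φ-torsion module `T`. -/
def IsNonnilInjective (R : Type u) [CommRing R] (M : Type u) [AddCommGroup M] [Module R M] :
    Prop :=
  ∀ (T : Type u) [AddCommGroup T] [Module R T], IsPhiTorsion R T →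
    Subsingleton (((Ext R (ModuleCat.{u} R) 1).obj (Opposite.op (ModuleCat.of R T))).obj
      (ModuleCat.of R M))

/-- A module `M` is nonnil-FP-injective if `Ext¹ᴿ(T, M) = 0` for every finitely
presented φ-torsion module `T`. -/
def IsNonnilFPInjective (R : Type u) [CommRing R] (M : Type u) [AddCommGroup M] [Module R M] :
    Prop :=
  ∀ (T : Type u) [AddCommGroup T] [Module R T], Module.FinitePresentation R T →
    IsPhiTorsion R T →
    Subsingleton (((Ext R (ModuleCat.{u} R) 1).obj (Opposite.op (ModuleCat.of R T))).obj
      (ModuleCat.of R M))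

/-- A submodule `N ≤ M` is pure if `Q ⊗ N → Q ⊗ M` is injective for every module `Q`. -/
def Submodule.IsPure (R : Type u) [CommRing R] {M : Type u} [AddCommGroup M] [Module R M]
    (N : Submodule R M) : Prop :=
  ∀ (Q : Type u) [AddCommGroup Q] [Module R Q],
    Function.Injective (LinearMap.lTensor Q N.subtype)

/-! Choose a presentation `0 → K → F → T → 0` of a finitely presented φ-torsion module `T`, with `F`
finite free. Then `Ext¹(T, M) = 0` says that all maps `K → M` extend to `F`. If `R` is
nonnil-coherent, then `K` is finitely presented, so maps `K → M ⧸ N` lift to `M` when `N` is pure,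
and these lifts extend to `F` if `Ext¹(T, M) = 0`.

Conversely, let `I` be a finitely generated nonnil ideal, written as `F ⧸ L` with `F` finite free.
For each finite `α ⊆ L` embed `F ⧸ ⟨α⟩` into an injective module `E α`. The families in `∏ E α` that
vanish for all large `α` form a pure submodule, and `I` maps to the quotient `Q` by it. Since
`Ext¹(R ⧸ I, Q) = 0`, this map extends to `R`, hence lifts to `∏ E α`. The lift, restricted along
`F → I`, agrees with `F → E α` for all large `α`, which forces `L = ⟨α⟩`. -/

section ExtOne

variable {R : Type u} [CommRing R]

theorem exact_lcomp_comp_iff_surjective_lcomp {X Y K F : Type*} [AddCommGroup X] [Module R X]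
    [AddCommGroup Y] [Module R Y] [AddCommGroup K] [Module R K] [AddCommGroup F] [Module R F]
    {a : X →ₗ[R] Y} {q : Y →ₗ[R] K} (haq : Function.Exact a q) (hq : Function.Surjective q)
    (i : K →ₗ[R] F) (M : Type*) [AddCommGroup M] [Module R M] :
    Function.Exact (LinearMap.lcomp R M (i ∘ₗ q)) (LinearMap.lcomp R M a) ↔
      Function.Surjective (LinearMap.lcomp R M i) := by
  have hexact := LinearMap.exact_lcomp_of_exact_of_surjective M haq hq
  constructor
  · intro h g
    obtain ⟨k, hk⟩ := (h (g ∘ₗ q)).1 (hexact.apply_apply_eq_zero g)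
    exact ⟨k, (LinearMap.cancel_right hq).1 hk⟩
  · intro h y
    rw [hexact y]
    exact ⟨fun ⟨g, hg⟩ ↦ (h g).imp fun k hk ↦ by rw [← hg, ← hk]; rfl,
      fun ⟨k, hk⟩ ↦ ⟨k ∘ₗ i, hk⟩⟩

/- Schanuel-type comparison: lift the identity of `T` to `σ : F → F'` and `τ : F' → F`. An extension
of `g ∘ σ` along `i`, pulled back by `τ`, agrees with `g` up to `g ∘ (σ ∘ τ - 1)`, which is defined
on all of `F'`. -/
theorem surjective_lcomp_of_surjective_lcomp {K F T K' F' : Type*}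
    [AddCommGroup K] [Module R K] [AddCommGroup F] [Module R F] [AddCommGroup T] [Module R T]
    [AddCommGroup K'] [Module R K'] [AddCommGroup F'] [Module R F']
    [Module.Projective R F] [Module.Projective R F']
    {i : K →ₗ[R] F} {f : F →ₗ[R] T} {i' : K' →ₗ[R] F'} {f' : F' →ₗ[R] T}
    (hif : Function.Exact i f) (hf : Function.Surjective f)
    (hi' : Function.Injective i') (hif' : Function.Exact i' f') (hf' : Function.Surjective f')
    {M : Type*} [AddCommGroup M] [Module R M] (h : Function.Surjective (LinearMap.lcomp R M i)) :
    Function.Surjective (LinearMap.lcomp R M i') := by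
  intro g
  obtain ⟨σ, hσ⟩ := Module.projective_lifting_property f' f hf'
  obtain ⟨τ, hτ⟩ := Module.projective_lifting_property f f' hf
  have hσ_apply (x : F) : f' (σ x) = f x := LinearMap.congr_fun hσ x
  have hτ_apply (x : F') : f (τ x) = f' x := LinearMap.congr_fun hτ x
  let s : K →ₗ[R] K' := LinearMap.codRestrictOfInjective (σ ∘ₗ i) i' hi' fun x ↦
    (hif' _).1 ((hσ_apply (i x)).trans (hif.apply_apply_eq_zero x))
  let d : F' →ₗ[R] K' := LinearMap.codRestrictOfInjective (σ ∘ₗ τ - LinearMap.id) i' hi' fun x ↦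
    (hif' _).1 (by simp [hσ_apply, hτ_apply])
  have hs (x : K) : i' (s x) = σ (i x) := LinearMap.codRestrictOfInjective_comp_apply ..
  have hd (x : F') : i' (d x) = σ (τ x) - x := LinearMap.codRestrictOfInjective_comp_apply ..
  obtain ⟨k, hk⟩ := h (g ∘ₗ s)
  refine ⟨k ∘ₗ τ - g ∘ₗ d, LinearMap.ext fun x ↦ ?_⟩
  obtain ⟨y, hy⟩ := (hif (τ (i' x))).1 ((hτ_apply _).trans (hif'.apply_apply_eq_zero x))
  have hsd : s y - d (i' x) = x := hi' (by rw [map_sub, hs, hd, hy, sub_sub_cancel])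
  calc k (τ (i' x)) - g (d (i' x)) = g (s y) - g (d (i' x)) := by
        rw [← hy]; exact congrArg (· - _) (LinearMap.congr_fun hk y)
    _ = g x := by rw [← map_sub, hsd]

theorem subsingleton_ext_one_iff_exact_lcomp {T : ModuleCat.{u} R} (P : ProjectiveResolution T)
    (M : ModuleCat.{u} R) :
    Subsingleton (((Ext R (ModuleCat.{u} R) 1).obj (Opposite.op T)).obj M) ↔
      Function.Exact (LinearMap.lcomp R M (P.complex.d 1 0).hom)
        (LinearMap.lcomp R M (P.complex.d 2 1).hom) := by
  rw [← ModuleCat.isZero_iff_subsingleton, (P.isoExt (R := R) 1 M).isZero_iff,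
    ← HomologicalComplex.exactAt_iff_isZero_homology,
    HomologicalComplex.exactAt_iff' _ 0 1 2 (by simp) (by simp),
    ShortComplex.ShortExact.moduleCat_exact_iff_function_exact]
  exact (Function.Exact.iff_of_ladder_linearEquiv (e₁ := ModuleCat.homLinearEquiv (S := R))
    (e₂ := ModuleCat.homLinearEquiv (S := R)) (e₃ := ModuleCat.homLinearEquiv (S := R))
    rfl rfl).symm

theorem subsingleton_ext_one_iff_surjective_lcomp {K F T : Type u}
    [AddCommGroup K] [Module R K] [AddCommGroup F] [Module R F] [AddCommGroup T] [Module R T]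
    [Module.Projective R F] {i : K →ₗ[R] F} {f : F →ₗ[R] T} (hi : Function.Injective i)
    (hif : Function.Exact i f) (hf : Function.Surjective f)
    (M : Type u) [AddCommGroup M] [Module R M] :
    Subsingleton (((Ext R (ModuleCat.{u} R) 1).obj (Opposite.op (ModuleCat.of R T))).obj
      (ModuleCat.of R M)) ↔ Function.Surjective (LinearMap.lcomp R M i) := by
  let P : ProjectiveResolution (ModuleCat.of R T) := projectiveResolution _
  let p : P.complex.X 0 →ₗ[R] T := (P.π.f 0).hom
  let b := (P.complex.d 1 0).hom
  have : Module.Projective R (P.complex.X 0) :=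
    (IsProjective.iff_projective _).2 (P.projective 0)
  have hp : Function.Surjective p := (ModuleCat.epi_iff_surjective _).1 inferInstance
  have hbp : Function.Exact b p :=
    (ShortComplex.ShortExact.moduleCat_exact_iff_function_exact _).1 P.exact₀
  have hab : Function.Exact (P.complex.d 2 1).hom b :=
    (ShortComplex.ShortExact.moduleCat_exact_iff_function_exact _).1 (P.exact_succ 0)
  have hjp : Function.Exact (LinearMap.range b).subtype p := by
    rw [LinearMap.exact_iff, hbp.linearMap_ker_eq, Submodule.range_subtype]
  have hj : Function.Injective (LinearMap.range b).subtype := Submodule.injective_subtype _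
  rw [subsingleton_ext_one_iff_exact_lcomp P]
  refine (exact_lcomp_comp_iff_surjective_lcomp (q := b.rangeRestrict) ?_
    b.surjective_rangeRestrict (LinearMap.range b).subtype M).trans ?_
  · exact (hj.comp_exact_iff_exact (i := (LinearMap.range b).subtype)).1 hab
  · exact ⟨surjective_lcomp_of_surjective_lcomp hjp hp hi hif hf,
      surjective_lcomp_of_surjective_lcomp hif hf hj hjp hp⟩

theorem subsingleton_ext_one_iff_surjective_lcomp_ker {F T : Type u} [AddCommGroup F]
    [Module R F] [AddCommGroup T] [Module R T] [Module.Projective R F] {f : F →ₗ[R] T}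
    (hf : Function.Surjective f) (M : Type u) [AddCommGroup M] [Module R M] :
    Subsingleton (((Ext R (ModuleCat.{u} R) 1).obj (Opposite.op (ModuleCat.of R T))).obj
      (ModuleCat.of R M)) ↔ Function.Surjective (LinearMap.lcomp R M (LinearMap.ker f).subtype) :=
  subsingleton_ext_one_iff_surjective_lcomp (Submodule.injective_subtype _)
    f.exact_subtype_ker_map hf M

theorem subsingleton_ext_one_of_injective (T M : Type u) [AddCommGroup T] [Module R T]
    [AddCommGroup M] [Module R M] [Module.Injective R M] :
    Subsingleton (((Ext R (ModuleCat.{u} R) 1).obj (Opposite.op (ModuleCat.of R T))).obj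
      (ModuleCat.of R M)) := by
  have hf : Function.Surjective (Finsupp.linearCombination R (id : T → T)) :=
    Finsupp.linearCombination_id_surjective R T
  rw [subsingleton_ext_one_iff_surjective_lcomp_ker hf]
  exact Module.Injective.extension_property R M _ _ _ (Submodule.injective_subtype _)

theorem isNonnilFPInjective_of_injective (M : Type u) [AddCommGroup M] [Module R M]
    [Module.Injective R M] : IsNonnilFPInjective R M :=
  fun T _ _ _ _ ↦ subsingleton_ext_one_of_injective T M

end ExtOne

section Pure

variable {R : Type u} [CommRing R] {M : Type u} [AddCommGroup M] [Module R M] {N : Submodule R M}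

/- `Q ⊗ N` for `Q = coker (F* → G*)` is the cokernel of `Hom(F, N) → Hom(G, N)`. -/
theorem exists_linearMap_comp_eq_of_isPure (hN : Submodule.IsPure R N) {F G : Type u}
    [AddCommGroup F] [Module R F] [Module.Finite R F] [Module.Projective R F]
    [AddCommGroup G] [Module R G] [Module.Finite R G] [Module.Projective R G]
    {g : G →ₗ[R] F} {ψ : F →ₗ[R] M} {ν : G →ₗ[R] N} (hν : N.subtype ∘ₗ ν = ψ ∘ₗ g) :
    ∃ χ : F →ₗ[R] N, χ ∘ₗ g = ν := by
  let W := LinearMap.range g.dualMap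
  have hexact (L : Type u) [AddCommGroup L] [Module R L] :
      Function.Exact (g.dualMap.rTensor L) (W.mkQ.rTensor L) :=
    rTensor_exact L (LinearMap.exact_map_mkQ_range _) W.mkQ_surjective
  obtain ⟨t, ht⟩ := (dualTensorHom_bijective (M := G) (N := N)).surjective ν
  obtain ⟨s, hs⟩ := (dualTensorHom_bijective (M := F) (N := M)).surjective ψ
  have hts : N.subtype.lTensor _ t = g.dualMap.rTensor M s :=
    (dualTensorHom_bijective (M := G) (N := M)).injective <| by
      have h₁ := LinearMap.congr_fun (dualTensorHom_comp_lTensor (M := G) N.subtype) t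
      have h₂ := LinearMap.congr_fun (dualTensorHom_comp_rTensor_dualMap (P := M) g) s
      simp only [LinearMap.comp_apply, ht, hs] at h₁ h₂
      exact h₁.trans (hν.trans h₂.symm)
  have ht_zero : W.mkQ.rTensor N t = 0 := hN (Module.Dual R G ⧸ W) <| by
    rw [map_zero, ← LinearMap.comp_apply, LinearMap.lTensor_comp_rTensor,
      ← LinearMap.rTensor_comp_lTensor, LinearMap.comp_apply, hts]
    exact (hexact M).apply_apply_eq_zero s
  obtain ⟨z, rfl⟩ := (hexact N t).1 ht_zero
  refine ⟨dualTensorHom R F N z, ?_⟩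
  rw [← ht]
  exact (LinearMap.congr_fun (dualTensorHom_comp_rTensor_dualMap (P := N) g) z).symm

theorem exists_mkQ_comp_eq_of_isPure (hN : Submodule.IsPure R N) {K : Type*} [AddCommGroup K]
    [Module R K] [Module.FinitePresentation R K] (φ : K →ₗ[R] M ⧸ N) :
    ∃ ψ : K →ₗ[R] M, N.mkQ ∘ₗ ψ = φ := by
  obtain ⟨n, m, f, g, hf, hgf⟩ := Module.FinitePresentation.exists_fin' R K
  obtain ⟨ψ, hψ⟩ := Module.projective_lifting_property N.mkQ (φ ∘ₗ f) N.mkQ_surjective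
  have hψg (x) : (ψ ∘ₗ g) x ∈ N := by
    rw [← N.ker_mkQ, LinearMap.mem_ker, LinearMap.comp_apply, ← LinearMap.comp_apply, hψ,
      LinearMap.comp_apply, hgf.apply_apply_eq_zero, map_zero]
  obtain ⟨χ, hχ⟩ := exists_linearMap_comp_eq_of_isPure hN
    (ν := (ψ ∘ₗ g).codRestrict N hψg) (LinearMap.subtype_comp_codRestrict _ _ _)
  obtain ⟨θ, hθ⟩ := (LinearMap.exact_lcomp_of_exact_of_surjective M hgf hf
    (ψ - N.subtype ∘ₗ χ)).1 <| LinearMap.ext fun x ↦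
      sub_eq_zero.2 (congrArg Subtype.val (LinearMap.congr_fun hχ x)).symm
  refine ⟨θ, (LinearMap.cancel_right hf).1 ?_⟩
  have hθ' : θ ∘ₗ f = ψ - N.subtype ∘ₗ χ := hθ
  rw [LinearMap.comp_assoc, hθ', LinearMap.comp_sub, hψ, ← LinearMap.comp_assoc,
    (LinearMap.exact_subtype_mkQ N).linearMap_comp_eq_zero, LinearMap.zero_comp, sub_zero]

theorem isPure_of_forall_finset_exists_retraction
    (h : ∀ s : Finset N, ∃ r : M →ₗ[R] N, ∀ x ∈ s, r x = x) : Submodule.IsPure R N := by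
  classical
  intro Q _ _
  rw [injective_iff_map_eq_zero]
  intro t ht
  obtain ⟨S, hS⟩ := TensorProduct.exists_finset t
  obtain ⟨r, hr⟩ := h (S.image Prod.snd)
  have hrt : r.lTensor Q (N.subtype.lTensor Q t) = t := by
    simp only [hS, map_sum, LinearMap.lTensor_tmul, Submodule.subtype_apply]
    exact Finset.sum_congr rfl fun y hy ↦ by rw [hr _ (Finset.mem_image_of_mem _ hy)]
  rw [← hrt, ht, map_zero]

end Pure

section EventuallyZero

open Filter

variable {A : Type*} (R : Type u) [CommRing R] (l : Filter A)

/-- The submodule of families in `∏ a, E a` vanishing eventually along the filter `l`; the quotient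
by it is the reduced product of the modules `E a`. -/
def eventuallyZero (E : A → Type*) [∀ a, AddCommGroup (E a)] [∀ a, Module R (E a)] :
    Submodule R (∀ a, E a) where
  carrier := {x | ∀ᶠ a in l, x a = 0}
  zero_mem' := Eventually.of_forall fun _ ↦ rfl
  add_mem' hx hy := by
    filter_upwards [hx, hy] with a hxa hya
    rw [Pi.add_apply, hxa, hya, add_zero]
  smul_mem' r x hx := by
    filter_upwards [hx] with a hxa
    rw [Pi.smul_apply, hxa, smul_zero]

theorem isPure_eventuallyZero {A : Type u} (l : Filter A) (E : A → Type u)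
    [∀ a, AddCommGroup (E a)] [∀ a, Module R (E a)] :
    Submodule.IsPure R (eventuallyZero R l E) := by
  classical
  refine isPure_of_forall_finset_exists_retraction fun s ↦ ?_
  let Z : Set A := {a | ∀ x ∈ s, (x : ∀ a, E a) a = 0}
  have hZ : Z ∈ l := (Filter.eventually_all_finset s).2 fun x _ ↦ x.2
  let trunc : (∀ a, E a) →ₗ[R] ∀ a, E a :=
    LinearMap.pi fun a ↦ if a ∈ Z then 0 else LinearMap.proj a
  have htrunc (x) : trunc x ∈ eventuallyZero R l E := by
    filter_upwards [hZ] with a ha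
    simp [trunc, ha]
  refine ⟨trunc.codRestrict _ htrunc, fun x hx ↦ Subtype.ext (funext fun a ↦ ?_)⟩
  by_cases ha : a ∈ Z
  · simp [trunc, ha, show (x : ∀ a, E a) a = 0 from ha x hx]
  · simp [trunc, ha]

variable {R l}

theorem eventually_proj_comp_eq_zero {E : A → Type*} [∀ a, AddCommGroup (E a)]
    [∀ a, Module R (E a)] {F : Type*} [AddCommGroup F] [Module R F] [Module.Finite R F]
    {d : F →ₗ[R] ∀ a, E a} (hd : (eventuallyZero R l E).mkQ ∘ₗ d = 0) :
    ∀ᶠ a in l, LinearMap.proj a ∘ₗ d = 0 := by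
  obtain ⟨s, hs⟩ := Module.Finite.fg_top (R := R) (M := F)
  have hmem (x : F) : ∀ᶠ a in l, d x a = 0 :=
    (Submodule.Quotient.mk_eq_zero _).1 (LinearMap.congr_fun hd x)
  filter_upwards [(Filter.eventually_all_finset s).2 fun x _ ↦ hmem x] with a ha
  exact LinearMap.ext_on hs ha

end EventuallyZero

theorem exists_injective_linearMap_to_injective {R : Type u} [CommRing R] (X : Type u)
    [AddCommGroup X] [Module R X] :
    ∃ (E : Type u) (_ : AddCommGroup E) (_ : Module R E) (ι : X →ₗ[R] E),
      Module.Injective R E ∧ Function.Injective ι := by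
  let E := Injective.under (ModuleCat.of R X)
  have : CategoryTheory.Injective (ModuleCat.of R E) :=
    inferInstanceAs (CategoryTheory.Injective E)
  exact ⟨E, inferInstance, inferInstance, (Injective.ι (ModuleCat.of R X)).hom,
    Module.injective_module_of_injective_object R E,
    (ModuleCat.mono_iff_injective _).1 inferInstance⟩

theorem finitePresentation_of_forall_exists_mkQ_comp_eq {R : Type u} [CommRing R] {M : Type u}
    [AddCommGroup M] [Module R M] [Module.Finite R M]
    (h : ∀ (A : Type u) (l : Filter A) (E : A → Type u) [∀ a, AddCommGroup (E a)]
      [∀ a, Module R (E a)] [∀ a, Module.Injective R (E a)]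
      (φ : M →ₗ[R] (∀ a, E a) ⧸ eventuallyZero R l E),
        ∃ ψ : M →ₗ[R] ∀ a, E a, (eventuallyZero R l E).mkQ ∘ₗ ψ = φ) :
    Module.FinitePresentation R M := by
  obtain ⟨n, p, hp⟩ := Module.Finite.exists_fin' R M
  refine Module.finitePresentation_of_free_of_surjective p hp ?_
  let S (α : Finset (LinearMap.ker p)) : Submodule R (Fin n → R) :=
    Submodule.span R (Subtype.val '' (α : Set (LinearMap.ker p)))
  choose E _ _ ι _ hι using fun α ↦ exists_injective_linearMap_to_injective (R := R) (_ ⧸ S α)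
  let N := eventuallyZero R Filter.atTop E
  let δ : (Fin n → R) →ₗ[R] ∀ α, E α := LinearMap.pi fun α ↦ ι α ∘ₗ (S α).mkQ
  have hδ (x α) : δ x α = 0 ↔ x ∈ S α :=
    (map_eq_zero_iff _ (hι α)).trans (Submodule.Quotient.mk_eq_zero _)
  have hker (x : LinearMap.ker p) : δ x ∈ N := by
    filter_upwards [Filter.eventually_ge_atTop {x}] with α hα
    exact (hδ _ _).2 (Submodule.subset_span ⟨x, Finset.singleton_subset_iff.1 hα, rfl⟩)
  obtain ⟨φ, hφ⟩ := (LinearMap.exact_lcomp_of_exact_of_surjective _ p.exact_subtype_ker_map hp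
    (N.mkQ ∘ₗ δ)).1 (LinearMap.ext fun x ↦ (Submodule.Quotient.mk_eq_zero _).2 (hker x))
  obtain ⟨ψ, hψ⟩ := h _ Filter.atTop E φ
  have hψp : N.mkQ ∘ₗ (ψ ∘ₗ p - δ) = 0 := by
    rw [LinearMap.comp_sub, ← LinearMap.comp_assoc, hψ, sub_eq_zero]
    exact hφ
  obtain ⟨α, hα⟩ := (eventually_proj_comp_eq_zero hψp).exists
  have hψδ (x) : ψ (p x) α = δ x α := sub_eq_zero.1 (LinearMap.congr_fun hα x)
  have hker_eq : LinearMap.ker p = S α := by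
    refine le_antisymm (fun x hx ↦ ?_) (Submodule.span_le.2 (Subtype.coe_image_subset _ _))
    rw [← hδ, ← hψδ, LinearMap.mem_ker.1 hx, map_zero, Pi.zero_apply]
  rw [hker_eq]
  exact Submodule.fg_span (α.finite_toSet.image _)

section PhiTorsion

variable {R : Type u} [CommRing R]

theorem isPhiTorsion_quotient_ideal_iff {I : Ideal R} :
    IsPhiTorsion R (R ⧸ I) ↔ ¬ I ≤ nilradical R := by
  constructor
  · intro h hI
    obtain ⟨J, hJ, hJ1⟩ := h (Submodule.Quotient.mk 1)
    refine hJ (le_trans (fun a ha ↦ ?_) hI)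
    have := hJ1 a ha
    rwa [← Submodule.Quotient.mk_smul, Submodule.Quotient.mk_eq_zero, smul_eq_mul,
      mul_one] at this
  · intro h t
    obtain ⟨t, rfl⟩ := Submodule.Quotient.mk_surjective _ t
    refine ⟨I, h, fun a ha ↦ ?_⟩
    rw [← Submodule.Quotient.mk_smul, Submodule.Quotient.mk_eq_zero]
    exact I.mul_mem_right t ha

theorem IsPhiTorsion.of_injective {T T' : Type u} [AddCommGroup T] [Module R T] [AddCommGroup T']
    [Module R T'] (hT : IsPhiTorsion R T) {f : T' →ₗ[R] T} (hf : Function.Injective f) :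
    IsPhiTorsion R T' := fun t ↦
  (hT (f t)).imp fun _ ⟨hI, h⟩ ↦ ⟨hI, fun a ha ↦ hf (by rw [map_smul, h a ha, map_zero])⟩

theorem IsPhiTorsion.of_surjective {T T' : Type u} [AddCommGroup T] [Module R T] [AddCommGroup T']
    [Module R T'] (hT : IsPhiTorsion R T) {f : T →ₗ[R] T'} (hf : Function.Surjective f) :
    IsPhiTorsion R T' := fun t ↦ by
  obtain ⟨t, rfl⟩ := hf t
  exact (hT t).imp fun _ ⟨hI, h⟩ ↦ ⟨hI, fun a ha ↦ by rw [← map_smul, h a ha, map_zero]⟩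

variable (R) in
/-- A module whose finitely generated submodules with φ-torsion quotient are finitely presented.
For the module `R` this is nonnil-coherence of the ring, and, unlike the latter, the notion can be
propagated along extensions. -/
def IsPhiTorsionCoherent (F : Type u) [AddCommGroup F] [Module R F] : Prop :=
  ∀ K : Submodule R F, K.FG → IsPhiTorsion R (F ⧸ K) → Module.FinitePresentation R K

theorem isPhiTorsionCoherent_self_iff : IsPhiTorsionCoherent R R ↔ IsNonnilCoherent R :=
  forall₂_congr fun _ _ ↦ by rw [isPhiTorsion_quotient_ideal_iff]

theorem IsPhiTorsionCoherent.of_exact {G F H : Type u} [AddCommGroup G] [Module R G]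
    [AddCommGroup F] [Module R F] [AddCommGroup H] [Module R H] {i : G →ₗ[R] F} {p : F →ₗ[R] H}
    (hi : Function.Injective i) (hip : Function.Exact i p) (hp : Function.Surjective p)
    (hG : IsPhiTorsionCoherent R G) (hH : IsPhiTorsionCoherent R H) :
    IsPhiTorsionCoherent R F := by
  intro K hK hFK
  have hcomap_torsion : IsPhiTorsion R (G ⧸ K.comap i) :=
    hFK.of_injective (f := (K.comap i).mapQ K i le_rfl) <| by
      rw [← LinearMap.ker_eq_bot, Submodule.ker_mapQ, Submodule.mkQ_map_self]
  have hmap_torsion : IsPhiTorsion R (H ⧸ K.map p) :=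
    hFK.of_surjective (f := K.mapQ (K.map p) p (Submodule.le_comap_map p K)) <|
      .of_comp (g := K.mkQ) ((Submodule.mkQ_surjective _).comp hp)
  let j : K.comap i →ₗ[R] K := i.restrict fun _ hx ↦ hx
  have hj : Function.Injective j := fun x y hxy ↦ Subtype.ext (hi (congrArg Subtype.val hxy))
  have hjp : Function.Exact j (p.submoduleMap K) := by
    rintro ⟨x, hx⟩
    constructor
    · intro hpx
      obtain ⟨y, rfl⟩ := (hip x).1 (congrArg Subtype.val hpx)
      exact ⟨⟨y, hx⟩, rfl⟩
    · rintro ⟨y, hy⟩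
      exact Subtype.ext ((hip x).2 ⟨y, congrArg Subtype.val hy⟩)
  let e : K.comap i ≃ₗ[R] LinearMap.ker (p.submoduleMap K) :=
    (LinearEquiv.ofInjective j hj).trans (LinearEquiv.ofEq _ _ hjp.linearMap_ker_eq.symm)
  have hp_surj := p.submoduleMap_surjective K
  have : Module.Finite R K := Module.Finite.iff_fg.2 hK
  have : Module.FinitePresentation R (K.map p) := hH _ (hK.map p) hmap_torsion
  have : Module.Finite R (LinearMap.ker (p.submoduleMap K)) :=
    Module.Finite.iff_fg.2 (Module.FinitePresentation.fg_ker _ hp_surj)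
  have hcomap_fg : (K.comap i).FG := Module.Finite.iff_fg.1 (Module.Finite.equiv e.symm)
  have : Module.FinitePresentation R (K.comap i) := hG _ hcomap_fg hcomap_torsion
  have : Module.FinitePresentation R (LinearMap.ker (p.submoduleMap K)) := .of_equiv e
  exact Module.finitePresentation_of_ker _ hp_surj

theorem isPhiTorsionCoherent_of_subsingleton (F : Type u) [AddCommGroup F] [Module R F]
    [Subsingleton F] : IsPhiTorsionCoherent R F :=
  fun _ _ _ ↦ inferInstance

theorem IsPhiTorsionCoherent.of_linearEquiv {F G : Type u} [AddCommGroup F] [Module R F]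
    [AddCommGroup G] [Module R G] (e : F ≃ₗ[R] G) (hF : IsPhiTorsionCoherent R F) :
    IsPhiTorsionCoherent R G :=
  .of_exact (H := PUnit) (p := 0) e.injective
    ((LinearMap.exact_zero_iff_surjective _ _).2 e.surjective) (fun _ ↦ ⟨0, rfl⟩) hF
    (isPhiTorsionCoherent_of_subsingleton _)

theorem IsPhiTorsionCoherent.pi {ι : Type} [Finite ι] (F : ι → Type u) [∀ i, AddCommGroup (F i)]
    [∀ i, Module R (F i)] (hF : ∀ i, IsPhiTorsionCoherent R (F i)) :
    IsPhiTorsionCoherent R (∀ i, F i) :=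
  Module.pi_induction' R (fun F _ _ ↦ IsPhiTorsionCoherent R F)
    (fun F _ _ ↦ IsPhiTorsionCoherent R F) .of_linearEquiv .of_linearEquiv
    (isPhiTorsionCoherent_of_subsingleton _)
    (.of_exact LinearMap.inl_injective .inl_snd LinearMap.snd_surjective) F hF

theorem IsNonnilCoherent.finitePresentation_ker (hR : IsNonnilCoherent R) {n : ℕ} {T : Type u}
    [AddCommGroup T] [Module R T] [Module.FinitePresentation R T] (hT : IsPhiTorsion R T)
    {f : (Fin n → R) →ₗ[R] T} (hf : Function.Surjective f) :
    Module.FinitePresentation R (LinearMap.ker f) :=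
  IsPhiTorsionCoherent.pi (fun _ : Fin n ↦ R) (fun _ ↦ isPhiTorsionCoherent_self_iff.2 hR) _
    (Module.FinitePresentation.fg_ker f hf)
    (hT.of_injective (f.quotKerEquivOfSurjective hf).injective)

end PhiTorsion

theorem IsNonnilCoherent.isNonnilFPInjective_quotient {R : Type u} [CommRing R]
    (hR : IsNonnilCoherent R) {M : Type u} [AddCommGroup M] [Module R M] {N : Submodule R M}
    (hM : IsNonnilFPInjective R M) (hN : Submodule.IsPure R N) :
    IsNonnilFPInjective R (M ⧸ N) := by
  intro T _ _ hT hT_torsion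
  obtain ⟨n, f, hf⟩ := Module.Finite.exists_fin' R T
  have : Module.FinitePresentation R (LinearMap.ker f) := hR.finitePresentation_ker hT_torsion hf
  rw [subsingleton_ext_one_iff_surjective_lcomp_ker hf]
  intro φ
  obtain ⟨ψ, rfl⟩ := exists_mkQ_comp_eq_of_isPure hN φ
  obtain ⟨h, rfl⟩ := (subsingleton_ext_one_iff_surjective_lcomp_ker hf M).1 (hM T hT hT_torsion) ψ
  exact ⟨N.mkQ ∘ₗ h, rfl⟩

theorem isNonnilCoherent_of_isNonnilFPInjective_quotient {R : Type u} [CommRing R]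
    (h : ∀ (M : Type u) [AddCommGroup M] [Module R M] (N : Submodule R M),
      IsNonnilFPInjective R M → Submodule.IsPure R N → IsNonnilFPInjective R (M ⧸ N)) :
    IsNonnilCoherent R := by
  intro I hI hI_nonnil
  have : Module.Finite R I := Module.Finite.iff_fg.2 hI
  have : Module.FinitePresentation R (R ⧸ I) :=
    Module.finitePresentation_of_surjective I.mkQ I.mkQ_surjective (by rwa [Submodule.ker_mkQ])
  refine finitePresentation_of_forall_exists_mkQ_comp_eq fun A l E _ _ _ φ ↦ ?_
  have hext := h _ _ (isNonnilFPInjective_of_injective _) (isPure_eventuallyZero R l E) (R ⧸ I) this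
    (isPhiTorsion_quotient_ideal_iff.2 hI_nonnil)
  obtain ⟨θ, hθ⟩ := (subsingleton_ext_one_iff_surjective_lcomp I.injective_subtype
    (LinearMap.exact_subtype_mkQ I) I.mkQ_surjective _).1 hext φ
  obtain ⟨ψ, rfl⟩ := Module.projective_lifting_property (eventuallyZero R l E).mkQ θ
    (Submodule.mkQ_surjective _)
  exact ⟨ψ ∘ₗ I.subtype, hθ⟩

theorem nonnilCoherent_iff_pure_quotient_nonnilFPInjective_general (R : Type u) [CommRing R] :
    IsNonnilCoherent R ↔
      ∀ (M : Type u) [AddCommGroup M] [Module R M] (N : Submodule R M),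
        IsNonnilFPInjective R M → Submodule.IsPure R N →
          IsNonnilFPInjective R (M ⧸ N) :=
  ⟨fun hR _ _ _ _ hM hN ↦ hR.isNonnilFPInjective_quotient hM hN,
    isNonnilCoherent_of_isNonnilFPInjective_quotient⟩

/-- A φ-ring `R` is nonnil-coherent if and only if every pure quotient
of a nonnil-FP-injective `R`-module is nonnil-FP-injective. -/
theorem nonnilCoherent_iff_pure_quotient_nonnilFPInjective (R : Type u) [CommRing R]
    (hR : IsPhiRing R) :
    IsNonnilCoherent R ↔
      ∀ (M : Type u) [AddCommGroup M] [Module R M] (N : Submodule R M),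
        IsNonnilFPInjective R M → Submodule.IsPure R N →
          IsNonnilFPInjective R (M ⧸ N) :=
  nonnilCoherent_iff_pure_quotient_nonnilFPInjective_general R
end

section
/- Let R be a φ-ring. The following are equivalent: (1) R is nonnil-coherent; (2) Hom_R(M,E) is φ-flat for every nonnil-FP-injective R-module M and every injective R-module E; (3) Hom_R(M,E) is φ-flat for every nonnil-injective R-module M and every injective R-module E. -/
open CategoryTheory

universe u

/-!
A φ-torsion module is an iterated extension of cyclic modules `R/I` with `I` nonnil, up to a direct
limit, so `M` is φ-flat iff `Tor₁(R/I, M) = 0` for all nonnil `I`. Equivalently, every relation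
`∑ aᵢ xᵢ = 0` in `M` with `(a₁, …, aₙ)` nonnil is trivial, i.e. `xᵢ = ∑ⱼ rᵢⱼ yⱼ` for finitely many
relations `∑ aᵢ rᵢⱼ = 0` in `R`.

Let `I = (a₁, …, aₙ)` be nonnil and `R` nonnil-coherent, so that the relations on `a` are spanned by
finitely many `rⱼ`. If `Ext¹(R/I, M) = 0`, then a tuple in `M` killed by all the `rⱼ` has the form
`(aᵢ w)ᵢ`, hence is killed by every `x : Mⁿ → E` with `∑ aᵢ xᵢ = 0`. By injectivity of `E`, such an
`x` factors through `(rⱼ)ⱼ : Mⁿ → Mᵐ`, which is the triviality of the relation.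

Conversely, let `J ⊆ Rⁿ` be the module of relations on `a`, let `E` be the character module of `R`
and let `M = E^J`. There is a tuple `xᵢ : M → E` with `∑ aᵢ xᵢ = 0` which restricts, on the copy
of `E` indexed by `c ∈ J`, to multiplication by `cᵢ`. If this one relation is trivial, its finitely
many coefficient vectors generate `J`, because `E` cogenerates the `R`-modules.
-/

universe v

section Factorization

variable {R : Type*} [Ring R] {A B C : Type*} [AddCommGroup A] [Module R A]
  [AddCommGroup B] [Module R B] [AddCommGroup C] [Module R C]

theorem exists_comp_eq_of_surjective {d : A →ₗ[R] B} (hd : Function.Surjective d) {f : A →ₗ[R] C}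
    (hf : LinearMap.ker d ≤ LinearMap.ker f) : ∃ g : B →ₗ[R] C, g ∘ₗ d = f := by
  refine ⟨(LinearMap.ker d).liftQ f hf ∘ₗ (d.quotKerEquivOfSurjective hd).symm,
    LinearMap.ext fun x => ?_⟩
  simp only [LinearMap.comp_apply, LinearEquiv.coe_coe,
    LinearMap.quotKerEquivOfSurjective_symm_apply, Submodule.liftQ_apply]

theorem exists_comp_eq_of_injective [Small.{v} R] {E : Type v} [AddCommGroup E] [Module R E]
    [Module.Injective R E] {d : A →ₗ[R] B} {f : A →ₗ[R] E}
    (hf : LinearMap.ker d ≤ LinearMap.ker f) : ∃ g : B →ₗ[R] E, g ∘ₗ d = f := by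
  obtain ⟨f', rfl⟩ := exists_comp_eq_of_surjective d.surjective_rangeRestrict
    (d.ker_rangeRestrict.trans_le hf)
  obtain ⟨g, rfl⟩ := Module.Injective.extension_property R E _ _
    (LinearMap.range d).subtype (Submodule.injective_subtype _) f'
  exact ⟨g, rfl⟩

end Factorization

section TensorProduct

open Function

variable {R : Type*} [CommRing R]
variable {K P M L F T : Type*} [AddCommGroup K] [Module R K] [AddCommGroup P] [Module R P]
  [AddCommGroup M] [Module R M] [AddCommGroup L] [Module R L] [AddCommGroup F] [Module R F]
  [AddCommGroup T] [Module R T]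

variable (T) in
theorem exact_lTensor_comp_iff {d : L →ₗ[R] F} {q : F →ₗ[R] K} (i : K →ₗ[R] P)
    (hq : Surjective q) (hdq : Exact d q) :
    Exact (d.lTensor T) ((i ∘ₗ q).lTensor T) ↔ Injective (i.lTensor T) := by
  have hexact := lTensor_exact T hdq hq
  rw [LinearMap.lTensor_comp]
  refine ⟨fun h => (injective_iff_map_eq_zero _).2 fun z hz => ?_, fun h => ?_⟩
  · obtain ⟨y, rfl⟩ := LinearMap.lTensor_surjective T hq z
    exact (hexact y).2 ((h y).1 hz)
  · exact hexact.comp_injective _ h (map_zero _)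

/-- The balancing of `Tor₁`: both sides say that `Tor₁(T, M) = 0`. -/
theorem lTensor_injective_iff_rTensor_injective [Module.Flat R P] [Module.Flat R F]
    {i : K →ₗ[R] P} {p : P →ₗ[R] M} (hi : Injective i) (hip : Exact i p) (hp : Surjective p)
    {j : L →ₗ[R] F} {q : F →ₗ[R] T} (hj : Injective j) (hjq : Exact j q) (hq : Surjective q) :
    Injective (i.lTensor T) ↔ Injective (j.rTensor M) := by
  refine ⟨fun h => ?_, fun h => ?_⟩
  · rw [← LinearMap.lTensor_inj_iff_rTensor_inj]
    rw [LinearMap.lTensor_inj_iff_rTensor_inj] at h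
    exact lTensor_injective_of_exact_of_exact_of_rTensor_injective hip hp hjq hq h
      (Module.Flat.lTensor_preserves_injective_linearMap j hj)
  · exact lTensor_injective_of_exact_of_exact_of_rTensor_injective hjq hq hip hp h
      (Module.Flat.lTensor_preserves_injective_linearMap i hi)

theorem lTensor_injective_of_exact [Module.Flat R P] (i : K →ₗ[R] P) {f : L →ₗ[R] F}
    {g : F →ₗ[R] T} (hf : Injective f) (hfg : Exact f g) (hg : Surjective g)
    (hL : Injective (i.lTensor L)) (hT : Injective (i.lTensor T)) :
    Injective (i.lTensor F) := by
  refine (injective_iff_map_eq_zero _).2 fun x hx => ?_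
  have hgx : g.rTensor K x = 0 := hT <| by
    rw [← LinearMap.comp_apply, LinearMap.lTensor_comp_rTensor,
      ← LinearMap.rTensor_comp_lTensor, LinearMap.comp_apply, hx, map_zero, map_zero]
  obtain ⟨y, rfl⟩ := (rTensor_exact K hfg hg x).1 hgx
  have hfy : f.rTensor P (i.lTensor L y) = 0 := by
    rw [← hx, ← LinearMap.comp_apply, ← LinearMap.comp_apply, LinearMap.lTensor_comp_rTensor,
      LinearMap.rTensor_comp_lTensor]
  have hiy := (map_eq_zero_iff _ (Module.Flat.rTensor_preserves_injective_linearMap f hf)).1 hfy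
  rw [(map_eq_zero_iff _ hL).1 hiy, map_zero]

theorem lTensor_injective_congr (i : K →ₗ[R] P) (e : F ≃ₗ[R] T) :
    Injective (i.lTensor F) ↔ Injective (i.lTensor T) := by
  have hcomm : e.toLinearMap.rTensor P ∘ₗ i.lTensor F = i.lTensor T ∘ₗ e.toLinearMap.rTensor K := by
    rw [LinearMap.lTensor_comp_rTensor, LinearMap.rTensor_comp_lTensor]
  rw [← (LinearEquiv.rTensor P e).comp_injective, ← (LinearEquiv.rTensor K e).injective_comp]
  exact iff_of_eq (congrArg (Injective ∘ DFunLike.coe) hcomm)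

theorem lTensor_injective_of_forall_fg [Module.Flat R P] (i : K →ₗ[R] P)
    (h : ∀ N : Submodule R T, N.FG → Injective (i.lTensor N)) : Injective (i.lTensor T) := by
  refine (injective_iff_map_eq_zero _).2 fun x hx => ?_
  obtain ⟨N, hN, hxN⟩ := Submodule.exists_fg_le_subset_range_rTensor_subtype {x}
    (Set.finite_singleton x)
  obtain ⟨y, rfl⟩ := hxN rfl
  have hy : N.subtype.rTensor P (i.lTensor N y) = 0 := by
    rw [← hx, ← LinearMap.comp_apply, ← LinearMap.comp_apply, LinearMap.lTensor_comp_rTensor,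
      LinearMap.rTensor_comp_lTensor]
  have hiy := (map_eq_zero_iff _ (Module.Flat.rTensor_preserves_injective_linearMap _
    N.injective_subtype)).1 hy
  rw [(map_eq_zero_iff _ (h N hN)).1 hiy, map_zero]

theorem lTensor_sup_span_singleton_injective [Module.Flat R P] (i : K →ₗ[R] P)
    {N : Submodule R T} (hN : Injective (i.lTensor N)) {t : T}
    (ht : ∀ I : Ideal R, Ideal.torsionOf R T t ≤ I → Injective (i.lTensor (R ⧸ I))) :
    Injective (i.lTensor ↥(N ⊔ R ∙ t)) := by
  have hmem (x : ↥(N ⊔ R ∙ t)) : N.mkQ x ∈ R ∙ N.mkQ t := by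
    obtain ⟨y, hy, z, hz, hyz⟩ := Submodule.mem_sup.1 x.2
    obtain ⟨r, rfl⟩ := Submodule.mem_span_singleton.1 hz
    refine Submodule.mem_span_singleton.2 ⟨r, ?_⟩
    rw [← hyz, map_add, map_smul, N.mkQ_apply y, (Submodule.Quotient.mk_eq_zero N).2 hy, zero_add]
  let g : ↥(N ⊔ R ∙ t) →ₗ[R] R ∙ N.mkQ t :=
    (N.mkQ ∘ₗ (N ⊔ R ∙ t).subtype).codRestrict (R ∙ N.mkQ t) hmem
  have hg : Surjective g := by
    rintro ⟨_, hx⟩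
    obtain ⟨r, rfl⟩ := Submodule.mem_span_singleton.1 hx
    exact ⟨⟨r • t, Submodule.mem_sup_right (Submodule.smul_mem _ r
      (Submodule.mem_span_singleton_self t))⟩, Subtype.ext (map_smul N.mkQ r t)⟩
  have hexact : Exact (Submodule.inclusion (le_sup_left : N ≤ N ⊔ R ∙ t)) g := fun x => by
    rw [Subtype.ext_iff]
    refine (Submodule.Quotient.mk_eq_zero N).trans ⟨fun hx => ⟨⟨x, hx⟩, rfl⟩, ?_⟩
    rintro ⟨y, rfl⟩
    exact y.2
  refine lTensor_injective_of_exact i (Submodule.inclusion_injective _) hexact hg hN ?_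
  refine (lTensor_injective_congr i (Ideal.quotTorsionOfEquivSpanSingleton R _ (N.mkQ t))).1
    (ht _ fun r hr => ?_)
  rw [Ideal.mem_torsionOf_iff] at hr ⊢
  rw [← map_smul, hr, map_zero]

theorem lTensor_injective_of_forall_quotient [Module.Flat R P] (i : K →ₗ[R] P)
    (h : ∀ (t : T) (I : Ideal R), Ideal.torsionOf R T t ≤ I → Injective (i.lTensor (R ⧸ I))) :
    Injective (i.lTensor T) := by
  suffices hsup : ∀ N : Submodule R T, N.FG → ∀ N' : Submodule R T,
      Injective (i.lTensor N') → Injective (i.lTensor ↥(N' ⊔ N)) by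
    refine lTensor_injective_of_forall_fg i fun N hN => ?_
    have := hsup N hN ⊥ (injective_of_subsingleton _)
    rwa [bot_sup_eq] at this
  intro N hN
  induction N, hN using Submodule.fg_induction with
  | singleton t => exact fun N' hN' => lTensor_sup_span_singleton_injective i hN' (h t)
  | sup N₁ N₂ _ _ h₁ h₂ =>
    intro N' hN'
    rw [← sup_assoc]
    exact h₂ _ (h₁ N' hN')

open TensorProduct in
theorem exists_sum_tmul_eq (z : K ⊗[R] M) (s : K) :
    ∃ (n : ℕ) (a : Fin n → K) (x : Fin n → M), s ∈ Set.range a ∧ ∑ i, a i ⊗ₜ x i = z := by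
  obtain ⟨S, rfl⟩ := TensorProduct.exists_finset z
  let e := S.equivFin.symm
  refine ⟨S.card + 1, Fin.cons s fun i => (e i).1.1, Fin.cons 0 fun i => (e i).1.2, ⟨0, rfl⟩, ?_⟩
  simp only [Fin.sum_univ_succ, Fin.cons_zero, Fin.cons_succ, tmul_zero, zero_add]
  rw [e.sum_comp fun p => p.1.1 ⊗ₜ[R] p.1.2, S.sum_coe_sort fun p => p.1 ⊗ₜ[R] p.2]

end TensorProduct

section ProjectiveResolution

open Function

section Syzygy

variable {R : Type u} [Ring R] {Z : ModuleCat.{u} R} (P : ProjectiveResolution Z)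

instance moduleProjective_resolution_term (n : ℕ) : Module.Projective R (P.complex.X n) :=
  (IsProjective.iff_projective _).2 (P.projective n)

theorem surjective_resolution_augmentation : Surjective (P.π.f 0).hom :=
  (ModuleCat.epi_iff_surjective _).1 (inferInstanceAs (Epi (P.π.f 0)))

theorem exists_surjective_onto_first_syzygy :
    ∃ q : P.complex.X 1 →ₗ[R] LinearMap.ker (P.π.f 0).hom,
      (LinearMap.ker (P.π.f 0).hom).subtype ∘ₗ q = (P.complex.d 1 0).hom ∧
        Surjective q ∧ Exact (P.complex.d 2 1).hom q := by
  have h₀ : Exact (P.complex.d 1 0).hom (P.π.f 0).hom :=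
    (ShortComplex.ShortExact.moduleCat_exact_iff_function_exact _).1 P.exact₀
  have h₁ : Exact (P.complex.d 2 1).hom (P.complex.d 1 0).hom :=
    (ShortComplex.ShortExact.moduleCat_exact_iff_function_exact _).1 (P.exact_succ 0)
  refine ⟨(P.complex.d 1 0).hom.codRestrict _ fun x => (h₀ _).2 ⟨x, rfl⟩, rfl, ?_, fun x => ?_⟩
  · rintro ⟨x, hx⟩
    obtain ⟨y, rfl⟩ := (h₀ x).1 hx
    exact ⟨y, rfl⟩
  · rw [← h₁ x]
    exact Subtype.ext_iff

end Syzygy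

variable {R : Type u} [CommRing R] {M : Type u} [AddCommGroup M] [Module R M]

theorem subsingleton_tor_one_iff_of_projectiveResolution
    (P : ProjectiveResolution (ModuleCat.of R M)) (T : Type u) [AddCommGroup T] [Module R T] :
    Subsingleton (((Tor (ModuleCat.{u} R) 1).obj (ModuleCat.of R T)).obj (ModuleCat.of R M)) ↔
      Injective ((LinearMap.ker (P.π.f 0).hom).subtype.lTensor T) := by
  obtain ⟨q, hq, hq_surj, hq_exact⟩ := exists_surjective_onto_first_syzygy P
  have e := P.isoLeftDerivedObj
    ((MonoidalCategory.tensoringLeft (ModuleCat.{u} R)).obj (ModuleCat.of R T)) 1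
  rw [← exact_lTensor_comp_iff T _ hq_surj hq_exact, hq, ← ModuleCat.isZero_iff_subsingleton,
    Tor_obj, e.isZero_iff]
  refine (HomologicalComplex.exactAt_iff_isZero_homology _ _).symm.trans ?_
  rw [HomologicalComplex.exactAt_iff' _ 2 1 0 (by simp) (by simp)]
  exact ShortComplex.ShortExact.moduleCat_exact_iff_function_exact _

theorem subsingleton_ext_one_iff_of_projectiveResolution
    (P : ProjectiveResolution (ModuleCat.of R M)) (N : Type u) [AddCommGroup N] [Module R N] :
    Subsingleton (((Ext R (ModuleCat.{u} R) 1).obj (Opposite.op (ModuleCat.of R M))).obj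
        (ModuleCat.of R N)) ↔
      ∀ f : LinearMap.ker (P.π.f 0).hom →ₗ[R] N,
        ∃ g : P.complex.X 0 →ₗ[R] N, g ∘ₗ (LinearMap.ker (P.π.f 0).hom).subtype = f := by
  obtain ⟨q, hq, hq_surj, hq_exact⟩ := exists_surjective_onto_first_syzygy P
  rw [← ModuleCat.isZero_iff_subsingleton, (P.isoExt (R := R) 1 (ModuleCat.of R N)).isZero_iff,
    ← HomologicalComplex.exactAt_iff_isZero_homology,
    HomologicalComplex.exactAt_iff' _ 0 1 2 (by simp) (by simp), ShortComplex.moduleCat_exact_iff]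
  refine ⟨fun h f => ?_, fun h f hf => ?_⟩
  · obtain ⟨g, hg⟩ := h (ModuleCat.ofHom (f ∘ₗ q)) (ModuleCat.hom_ext (by
      change (f ∘ₗ q) ∘ₗ (P.complex.d 2 1).hom = 0
      rw [LinearMap.comp_assoc, hq_exact.linearMap_comp_eq_zero, LinearMap.comp_zero]))
    refine ⟨g.hom, (LinearMap.cancel_right hq_surj).1 ?_⟩
    rw [LinearMap.comp_assoc, hq]
    exact congrArg ModuleCat.Hom.hom hg
  · have hfd : f.hom ∘ₗ (P.complex.d 2 1).hom = 0 := congrArg ModuleCat.Hom.hom hf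
    obtain ⟨f', hf'⟩ := exists_comp_eq_of_surjective (f := f.hom) hq_surj (by
      rw [hq_exact.linearMap_ker_eq, LinearMap.range_le_ker_iff, hfd])
    obtain ⟨g, hg⟩ := h f'
    refine ⟨ModuleCat.ofHom g, ModuleCat.hom_ext ?_⟩
    change g ∘ₗ (P.complex.d 1 0).hom = f.hom
    rw [← hq, ← LinearMap.comp_assoc, hg, hf']

theorem subsingleton_tor_one_quotient_iff {F : Type u} [AddCommGroup F] [Module R F]
    [Module.Flat R F] (N : Submodule R F) (M : Type u) [AddCommGroup M] [Module R M] :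
    Subsingleton
        (((Tor (ModuleCat.{u} R) 1).obj (ModuleCat.of R (F ⧸ N))).obj (ModuleCat.of R M)) ↔
      Injective (N.subtype.rTensor M) := by
  let P := projectiveResolution (ModuleCat.of R M)
  exact (subsingleton_tor_one_iff_of_projectiveResolution P _).trans
    (lTensor_injective_iff_rTensor_injective (Submodule.injective_subtype _)
      (LinearMap.exact_subtype_ker_map _) (surjective_resolution_augmentation P)
      N.injective_subtype (LinearMap.exact_subtype_mkQ N) N.mkQ_surjective)

theorem subsingleton_tor_one_of_forall_quotient {T : Type u} [AddCommGroup T] [Module R T]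
    (h : ∀ (t : T) (I : Ideal R), Ideal.torsionOf R T t ≤ I → Subsingleton
      (((Tor (ModuleCat.{u} R) 1).obj (ModuleCat.of R (R ⧸ I))).obj (ModuleCat.of R M))) :
    Subsingleton (((Tor (ModuleCat.{u} R) 1).obj (ModuleCat.of R T)).obj (ModuleCat.of R M)) := by
  let P := projectiveResolution (ModuleCat.of R M)
  rw [subsingleton_tor_one_iff_of_projectiveResolution P]
  exact lTensor_injective_of_forall_quotient _ fun t I hI =>
    (subsingleton_tor_one_iff_of_projectiveResolution P _).1 (h t I hI)

theorem exists_extension_of_subsingleton_ext_one {F : Type u} [AddCommGroup F] [Module R F]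
    {N : Submodule R F} (h : Subsingleton (((Ext R (ModuleCat.{u} R) 1).obj
      (Opposite.op (ModuleCat.of R (F ⧸ N)))).obj (ModuleCat.of R M))) (f : N →ₗ[R] M) :
    ∃ g : F →ₗ[R] M, g ∘ₗ N.subtype = f := by
  let P := projectiveResolution (ModuleCat.of R (F ⧸ N))
  let π : P.complex.X 0 →ₗ[R] F ⧸ N := (P.π.f 0).hom
  have hπ : Surjective π := surjective_resolution_augmentation P
  obtain ⟨σ, hσ⟩ := Module.projective_lifting_property N.mkQ π N.mkQ_surjective
  have hσ' (p) : N.mkQ (σ p) = π p := LinearMap.congr_fun hσ p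
  have hker (p : LinearMap.ker π) : σ p ∈ N :=
    (Submodule.Quotient.mk_eq_zero N).1 ((hσ' p).trans p.2)
  obtain ⟨k, hk⟩ := (subsingleton_ext_one_iff_of_projectiveResolution P M).1 h
    (f ∘ₗ (σ ∘ₗ (LinearMap.ker π).subtype).codRestrict N hker)
  have hk' (p : LinearMap.ker π) : k p = f ⟨σ p, hker p⟩ := LinearMap.congr_fun hk p
  have hsurj : Surjective (N.subtype.coprod σ) := fun x => by
    obtain ⟨p, hp⟩ := hπ (N.mkQ x)
    have hx : x - σ p ∈ N := (Submodule.Quotient.eq N).1 (hp.symm.trans (hσ' p).symm)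
    exact ⟨(⟨x - σ p, hx⟩, p), sub_add_cancel x (σ p)⟩
  obtain ⟨g, hg⟩ := exists_comp_eq_of_surjective (f := f.coprod k) hsurj (by
    rintro ⟨y, p⟩ hyp
    have hsum : (y : F) + σ p = 0 := hyp
    have hp : π p = 0 := by
      rw [← hσ' p, eq_neg_of_add_eq_zero_right hsum]
      exact (Submodule.Quotient.mk_eq_zero N).2 (N.neg_mem y.2)
    rw [LinearMap.mem_ker, LinearMap.coprod_apply, hk' ⟨p, hp⟩, ← map_add]
    exact (congrArg f (Subtype.ext hsum)).trans (map_zero f))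
  refine ⟨g, LinearMap.ext fun y => ?_⟩
  simpa using LinearMap.congr_fun hg (y, 0)

end ProjectiveResolution

section PhiFlat

variable {R : Type u} [CommRing R]

theorem isPhiTorsion_quotient {I : Ideal R} (hI : ¬ I ≤ nilradical R) : IsPhiTorsion R (R ⧸ I) :=
  fun t => ⟨I, hI, fun a ha => by
    obtain ⟨s, rfl⟩ := Ideal.Quotient.mk_surjective t
    rw [Algebra.smul_def, Ideal.Quotient.algebraMap_eq, Ideal.Quotient.eq_zero_iff_mem.2 ha,
      zero_mul]⟩

theorem isPhiFlat_iff_forall_rTensor_injective {M : Type u} [AddCommGroup M] [Module R M] :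
    IsPhiFlat R M ↔
      ∀ I : Ideal R, ¬ I ≤ nilradical R → Function.Injective (I.subtype.rTensor M) := by
  refine ⟨fun h I hI => (subsingleton_tor_one_quotient_iff I M).1
    (h _ (isPhiTorsion_quotient hI)), fun h T _ _ hT => ?_⟩
  refine subsingleton_tor_one_of_forall_quotient fun t I hI =>
    (subsingleton_tor_one_quotient_iff I M).2 (h I fun hI' => ?_)
  obtain ⟨J, hJ, hJt⟩ := hT t
  exact hJ fun a ha => hI' (hI ((Ideal.mem_torsionOf_iff _ _).2 (hJt a ha)))

open Module TensorProduct in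
theorem isPhiFlat_iff_forall_isTrivialRelation {M : Type u} [AddCommGroup M] [Module R M] :
    IsPhiFlat R M ↔ ∀ (n : ℕ) (a : Fin n → R), ¬ Ideal.span (Set.range a) ≤ nilradical R →
      ∀ x : Fin n → M, ∑ i, a i • x i = 0 → IsTrivialRelation a x := by
  rw [isPhiFlat_iff_forall_rTensor_injective]
  refine ⟨fun h n a ha x hx => ?_, fun h I hI => ?_⟩
  · rw [isTrivialRelation_iff_vanishesTrivially]
    refine vanishesTrivially_of_sum_tmul_eq_zero_of_rTensor_injective R (h _ ha) ?_
    exact (TensorProduct.lid R M).injective (by simpa using hx)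
  · obtain ⟨s, hsI, hs⟩ := SetLike.not_le_iff_exists.1 hI
    refine (injective_iff_map_eq_zero _).2 fun z hz => ?_
    obtain ⟨n, a, x, ⟨i, hi⟩, rfl⟩ := exists_sum_tmul_eq z ⟨s, hsI⟩
    obtain ⟨k, r, y, hy, hr⟩ := h n (fun i => (a i : R))
      (fun hle => hs (hle (Ideal.subset_span ⟨i, congrArg Subtype.val hi⟩))) x
      (by simpa using congrArg (TensorProduct.lid R M) hz)
    refine sum_tmul_eq_zero_of_vanishesTrivially R ⟨k, r, y, hy, fun j => Subtype.ext ?_⟩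
    simpa [mul_comm] using hr j

end PhiFlat

section NonnilInjective

variable {R : Type u} [CommRing R] {M : Type u} [AddCommGroup M] [Module R M]

theorem IsNonnilInjective.isNonnilFPInjective (h : IsNonnilInjective R M) :
    IsNonnilFPInjective R M :=
  fun T _ _ _ hT => h T hT

theorem isNonnilInjective_of_injective [Module.Injective R M] : IsNonnilInjective R M :=
  fun T _ _ _ => (subsingleton_ext_one_iff_of_projectiveResolution
    (projectiveResolution (ModuleCat.of R T)) M).2 fun f =>
      Module.Injective.extension_property R M _ _ _ (Submodule.injective_subtype _) f

end NonnilInjective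

section Coherent

theorem exists_forall_eq_smul_of_extension {R M ι κ : Type*} [CommRing R] [AddCommGroup M]
    [Module R M] [Fintype ι] {a : ι → R} {r : κ → ι → R}
    (hr : LinearMap.ker (Fintype.linearCombination R a) ≤ Submodule.span R (Set.range r))
    (hM : ∀ f : LinearMap.range (Fintype.linearCombination R a) →ₗ[R] M,
      ∃ g : R →ₗ[R] M, g ∘ₗ Submodule.subtype _ = f)
    {v : ι → M} (hv : ∀ j, ∑ i, r j i • v i = 0) : ∃ w : M, ∀ i, v i = a i • w := by
  classical
  have hker : LinearMap.ker (Fintype.linearCombination R a).rangeRestrict ≤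
      LinearMap.ker (Fintype.linearCombination R v) := by
    rw [LinearMap.ker_rangeRestrict]
    refine hr.trans (Submodule.span_le.2 ?_)
    rintro _ ⟨j, rfl⟩
    exact hv j
  obtain ⟨f, hf⟩ := exists_comp_eq_of_surjective (LinearMap.surjective_rangeRestrict _) hker
  obtain ⟨g, hg⟩ := hM f
  refine ⟨g 1, fun i => ?_⟩
  have hi : g (a i) = v i := by
    have := LinearMap.congr_fun hf (Pi.single i 1)
    rw [← hg] at this
    simpa using this
  rw [← hi, ← map_smul, smul_eq_mul, mul_one]

theorem exists_forall_eq_sum_smul_of_injective {R ι κ M : Type*} {E : Type v} [CommRing R]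
    [Small.{v} R] [Fintype ι] [Fintype κ] [AddCommGroup M] [Module R M] [AddCommGroup E]
    [Module R E] [Module.Injective R E] {r : κ → ι → R} {x : ι → M →ₗ[R] E}
    (h : ∀ v : ι → M, (∀ j, ∑ i, r j i • v i = 0) → ∑ i, x i (v i) = 0) :
    ∃ y : κ → M →ₗ[R] E, ∀ i, x i = ∑ j, r j i • y j := by
  classical
  let d : (ι → M) →ₗ[R] κ → M := LinearMap.pi fun j => ∑ i, r j i • LinearMap.proj i
  have hd (v j) : d v j = ∑ i, r j i • v i := by simp [d]
  obtain ⟨g, hg⟩ := exists_comp_eq_of_injective (d := d) (f := LinearMap.lsum R (fun _ => M) R x)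
    fun v hv => by
      simpa using h v fun j => (hd v j).symm.trans (congrFun hv j)
  refine ⟨fun j => g ∘ₗ LinearMap.single R (fun _ => M) j, fun i => LinearMap.ext fun w => ?_⟩
  have hdw : d (Pi.single i w) = ∑ j, r j i • Pi.single j w := by
    ext j
    simp [hd, Pi.single_apply]
  have hxw := LinearMap.congr_fun hg (Pi.single i w)
  rw [LinearMap.lsum_piSingle, LinearMap.comp_apply, hdw, map_sum] at hxw
  simpa using hxw.symm

open Module in
theorem isTrivialRelation_hom_of_extension {R ι M : Type*} {E : Type v} [CommRing R]
    [Small.{v} R] [Fintype ι] [AddCommGroup M] [Module R M] [AddCommGroup E]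
    [Module R E] [Module.Injective R E] {a : ι → R}
    (ha : (LinearMap.ker (Fintype.linearCombination R a)).FG)
    (hM : ∀ f : LinearMap.range (Fintype.linearCombination R a) →ₗ[R] M,
      ∃ g : R →ₗ[R] M, g ∘ₗ Submodule.subtype _ = f)
    {x : ι → M →ₗ[R] E} (hx : ∑ i, a i • x i = 0) : IsTrivialRelation a x := by
  obtain ⟨m, r, hr⟩ := Submodule.fg_iff_exists_fin_generating_family.1 ha
  obtain ⟨y, hy⟩ : ∃ y : Fin m → M →ₗ[R] E, ∀ i, x i = ∑ j, r j i • y j := by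
    refine exists_forall_eq_sum_smul_of_injective fun v hv => ?_
    obtain ⟨w, hw⟩ := exists_forall_eq_smul_of_extension hr.ge hM hv
    simpa [hw] using LinearMap.congr_fun hx w
  refine ⟨m, fun i j => r j i, y, hy, fun j => ?_⟩
  have hrj : r j ∈ LinearMap.ker (Fintype.linearCombination R a) :=
    hr ▸ Submodule.subset_span ⟨j, rfl⟩
  simpa [Fintype.linearCombination_apply, mul_comm] using hrj

theorem IsNonnilCoherent.isPhiFlat_hom {R : Type u} [CommRing R] (hR : IsNonnilCoherent R)
    {M E : Type u} [AddCommGroup M] [Module R M] [AddCommGroup E] [Module R E]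
    [Module.Injective R E] (hM : IsNonnilFPInjective R M) : IsPhiFlat R (M →ₗ[R] E) := by
  rw [isPhiFlat_iff_forall_isTrivialRelation]
  intro n a ha x hx
  let I : Ideal R := LinearMap.range (Fintype.linearCombination R a)
  have hI : ¬ I ≤ nilradical R := by
    rwa [Ideal.span, ← Fintype.range_linearCombination] at ha
  have hI_fg : I.FG := Submodule.fg_range _
  have := hR I hI_fg hI
  have hquot : Module.FinitePresentation R (R ⧸ I) :=
    Module.finitePresentation_of_surjective I.mkQ I.mkQ_surjective (by rwa [I.ker_mkQ])
  refine isTrivialRelation_hom_of_extension ?_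
    (exists_extension_of_subsingleton_ext_one (hM _ hquot (isPhiTorsion_quotient hI))) hx
  rw [← LinearMap.ker_rangeRestrict]
  exact Module.FinitePresentation.fg_ker _ (LinearMap.surjective_rangeRestrict _)

end Coherent

section Character

instance characterModule_self_injective (R : Type u) [CommRing R] :
    Module.Injective R (CharacterModule R) :=
  Module.Flat.iff_characterModule_injective.1 inferInstance

theorem exists_linearMap_characterModule_apply_ne_zero {R A : Type*} [CommRing R]
    [AddCommGroup A] [Module R A] {x : A} (hx : x ≠ 0) :
    ∃ ψ : A →ₗ[R] CharacterModule R, ψ x ≠ 0 := by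
  obtain ⟨χ, hχ⟩ := CharacterModule.exists_character_apply_ne_zero_of_ne_zero hx
  refine ⟨CharacterModule.curry (CharacterModule.dual (TensorProduct.rid R A).toLinearMap χ),
    fun h => hχ ?_⟩
  have h₁ : χ ((1 : R) • x) = 0 := DFunLike.congr_fun h 1
  rwa [one_smul] at h₁

theorem mem_of_forall_le_ker {R A : Type*} [CommRing R] [AddCommGroup A] [Module R A]
    {S : Submodule R A} {x : A}
    (h : ∀ ψ : A →ₗ[R] CharacterModule R, S ≤ LinearMap.ker ψ → ψ x = 0) : x ∈ S := by
  by_contra hx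
  obtain ⟨ψ, hψ⟩ := exists_linearMap_characterModule_apply_ne_zero (R := R)
    (mt (Submodule.Quotient.mk_eq_zero S).1 hx)
  refine hψ (h (ψ ∘ₗ S.mkQ) ?_)
  exact S.ker_mkQ.ge.trans (LinearMap.ker_le_ker_comp _ _)

theorem mem_span_range_of_forall_smul_eq {R ι κ : Type*} [CommRing R] [Finite ι] [Fintype κ]
    {c : ι → R} {r : ι → κ → R} (y : κ → CharacterModule R →ₗ[R] CharacterModule R)
    (h : ∀ i z, c i • z = ∑ j, r i j • y j z) :
    c ∈ Submodule.span R (Set.range fun j i => r i j) := by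
  classical
  have := Fintype.ofFinite ι
  refine mem_of_forall_le_ker fun ψ hψ => ?_
  let e (i : ι) : CharacterModule R := ψ fun j => if i = j then 1 else 0
  have hψe (d : ι → R) : ψ d = ∑ i, d i • e i := ψ.pi_apply_eq_sum_univ d
  have hre (j : κ) : ∑ i, r i j • e i = 0 :=
    (hψe _).symm.trans (hψ (Submodule.subset_span ⟨j, rfl⟩))
  calc ψ c = ∑ i, ∑ j, r i j • y j (e i) := by simp only [hψe, h]
    _ = ∑ j, y j (∑ i, r i j • e i) := by
      rw [Finset.sum_comm]
      simp only [map_sum, map_smul]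
    _ = 0 := by simp only [hre, map_zero, Finset.sum_const_zero]

theorem exists_hom_pi_of_relations {R ι X : Type*} {E : Type v} [CommRing R] [Small.{v} R]
    [Fintype ι] [AddCommGroup E] [Module R E] [Module.Injective R E] [DecidableEq X]
    {a : ι → R} {c : X → ι → R} (hc : ∀ s, ∑ i, a i * c s i = 0) :
    ∃ f : ι → (X → E) →ₗ[R] E, ∑ i, a i • f i = 0 ∧
      ∀ i s z, f i (Pi.single s z) = c s i • z := by
  classical
  -- `f` is read off an extension to `ι → X → E` of `0` on the image of `α` and `f₀` on that of `κ`;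
  -- the two agree where the images meet because each `c s` is a relation on `a`.
  let α : (X → E) →ₗ[R] ι → X → E := LinearMap.pi fun i => a i • LinearMap.id
  let κ : (X →₀ (ι → E)) →ₗ[R] ι → X → E :=
    LinearMap.pi fun i => Finsupp.lcoeFun ∘ₗ Finsupp.mapRange.linearMap (LinearMap.proj i)
  let f₀ : (X →₀ (ι → E)) →ₗ[R] E := Finsupp.lsum R fun s => ∑ i, c s i • LinearMap.proj i
  have hα (w i) : α w i = a i • w := rfl
  have hκ (v i s) : κ v i s = v s i := rfl
  have hf₀ (v) : f₀ v = v.sum fun s e => ∑ i, c s i • e i := by simp [f₀, Finsupp.sum]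
  obtain ⟨g, hg⟩ := exists_comp_eq_of_injective (d := α.coprod κ)
    (f := (0 : (X → E) →ₗ[R] E).coprod f₀) (by
      rintro ⟨w, v⟩ hwv
      have hv (s i) : v s i = a i • -w s := by
        rw [smul_neg]
        exact eq_neg_of_add_eq_zero_right (congrFun (congrFun hwv i) s)
      suffices ∀ s, ∑ i, c s i • v s i = 0 by simp [hf₀, Finsupp.sum, this]
      intro s
      simp only [hv, smul_smul, ← Finset.sum_smul, mul_comm (c s _), hc, zero_smul])
  have hgα (w) : g (α w) = 0 := by simpa using LinearMap.congr_fun hg (w, 0)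
  have hgκ (v) : g (κ v) = f₀ v := by simpa using LinearMap.congr_fun hg (0, v)
  refine ⟨fun i => g ∘ₗ LinearMap.single R (fun _ => X → E) i, LinearMap.ext fun w => ?_,
    fun i s z => ?_⟩
  · have hαw : α w = ∑ i, a i • Pi.single i w := by
      ext i s
      simp [hα, Finset.sum_apply, Pi.single_apply, ite_apply]
    simpa [hαw] using hgα w
  · have hκs : κ (Finsupp.single s (Pi.single i z)) = Pi.single i (Pi.single s z) := by
      ext k t
      rcases eq_or_ne t s with rfl | hts <;> rcases eq_or_ne k i with rfl | hki <;>
        simp [*]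
    rw [LinearMap.comp_apply, LinearMap.single_apply, ← hκs, hgκ, hf₀,
      Finsupp.sum_single_index (by simp)]
    simp [Pi.single_apply]

open Module in
theorem fg_ker_of_forall_isTrivialRelation_hom {R : Type u} [CommRing R] {ι : Type*} [Fintype ι]
    {a : ι → R}
    (h : ∀ x : ι → (LinearMap.ker (Fintype.linearCombination R a) → CharacterModule R) →ₗ[R]
      CharacterModule R, ∑ i, a i • x i = 0 → IsTrivialRelation a x) :
    (LinearMap.ker (Fintype.linearCombination R a)).FG := by
  classical
  set J := LinearMap.ker (Fintype.linearCombination R a)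
  have hJ (c) : c ∈ J ↔ ∑ i, a i * c i = 0 := by
    simp [J, Fintype.linearCombination_apply, mul_comm]
  obtain ⟨f, hf, hfc⟩ := exists_hom_pi_of_relations (E := CharacterModule R)
    (c := fun s : J => s.1) fun s => (hJ s).1 s.2
  obtain ⟨m, r, y, hy, hr⟩ := h f hf
  refine Submodule.fg_iff_exists_fin_generating_family.2 ⟨m, fun j i => r i j, le_antisymm ?_ ?_⟩
  · rw [Submodule.span_le]
    rintro _ ⟨j, rfl⟩
    exact (hJ _).2 (hr j)
  · intro c hc
    refine mem_span_range_of_forall_smul_eq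
      (fun j => y j ∘ₗ LinearMap.single R (fun _ => CharacterModule R) (⟨c, hc⟩ : J)) fun i z => ?_
    rw [← hfc i ⟨c, hc⟩ z, hy]
    simp

theorem isNonnilCoherent_of_forall_isPhiFlat_hom {R : Type u} [CommRing R]
    (h : ∀ (M : Type u) [AddCommGroup M] [Module R M] (E : Type u) [AddCommGroup E] [Module R E],
      IsNonnilInjective R M → Module.Injective R E → IsPhiFlat R (M →ₗ[R] E)) :
    IsNonnilCoherent R := by
  intro I hI hn
  obtain ⟨n, a, rfl⟩ := Submodule.fg_iff_exists_fin_generating_family.1 hI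
  have hfg := fg_ker_of_forall_isTrivialRelation_hom
    (isPhiFlat_iff_forall_isTrivialRelation.1
      (h _ _ isNonnilInjective_of_injective inferInstance) n a hn)
  rw [← LinearMap.ker_rangeRestrict] at hfg
  rw [← Fintype.range_linearCombination]
  exact Module.finitePresentation_of_free_of_surjective _
    (LinearMap.surjective_rangeRestrict _) hfg

end Character

theorem nonnilCoherent_iff_hom_phiFlat_general (R : Type u) [CommRing R] :
    (IsNonnilCoherent R ↔
      ∀ (M : Type u) [AddCommGroup M] [Module R M]
        (E : Type u) [AddCommGroup E] [Module R E],
        IsNonnilFPInjective R M → Module.Injective R E → IsPhiFlat R (M →ₗ[R] E)) ∧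
    (IsNonnilCoherent R ↔
      ∀ (M : Type u) [AddCommGroup M] [Module R M]
        (E : Type u) [AddCommGroup E] [Module R E],
        IsNonnilInjective R M → Module.Injective R E → IsPhiFlat R (M →ₗ[R] E)) := by
  have hom_phiFlat (hR : IsNonnilCoherent R) (M : Type u) [AddCommGroup M] [Module R M]
      (E : Type u) [AddCommGroup E] [Module R E] (hM : IsNonnilFPInjective R M)
      (_ : Module.Injective R E) : IsPhiFlat R (M →ₗ[R] E) := hR.isPhiFlat_hom hM
  exact ⟨⟨hom_phiFlat, fun h => isNonnilCoherent_of_forall_isPhiFlat_hom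
      fun M _ _ E _ _ hM => h M E hM.isNonnilFPInjective⟩,
    ⟨fun hR M _ _ E _ _ hM => hom_phiFlat hR M E hM.isNonnilFPInjective,
      isNonnilCoherent_of_forall_isPhiFlat_hom⟩⟩

/-- For a φ-ring `R` the following are equivalent: (1) `R` is
nonnil-coherent; (2) `Hom_R(M,E)` is φ-flat for every nonnil-FP-injective `M` and
injective `E`; (3) `Hom_R(M,E)` is φ-flat for every nonnil-injective `M` and
injective `E`. -/
theorem nonnilCoherent_iff_hom_phiFlat (R : Type u) [CommRing R] (hR : IsPhiRing R) :
    (IsNonnilCoherent R ↔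
      ∀ (M : Type u) [AddCommGroup M] [Module R M]
        (E : Type u) [AddCommGroup E] [Module R E],
        IsNonnilFPInjective R M → Module.Injective R E → IsPhiFlat R (M →ₗ[R] E)) ∧
    (IsNonnilCoherent R ↔
      ∀ (M : Type u) [AddCommGroup M] [Module R M]
        (E : Type u) [AddCommGroup E] [Module R E],
        IsNonnilInjective R M → Module.Injective R E → IsPhiFlat R (M →ₗ[R] E)) :=
  nonnilCoherent_iff_hom_phiFlat_general R
end
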